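/- If w is a Galois word over a linearly ordered alphabet and u is a border of w (a nonempty proper factor of w that is both a prefix and a suffix of w), then the length of u is odd. -/

import Mathlib

/-!
Write `w = uv = v'u`, where `u` is the border. Since `w` is Galois, `uv = w ≼_alt uv'`. Cancelling a
common prefix of even length preserves `≼_alt`, so if `|u|` is even then `v ≼_alt v'`, whence
`vu ≼_alt v'u = w`. But also `w ≼_alt vu`, so `uv = vu`, contradicting primitivity.
-/

namespace Paper

variable {α : Type*}

/-- Extended alternating lexicographic strict order; the flag `b` is `true`
when the current position index is even. -/
def altLtAux [LinearOrder α] : Bool → List α → List α → Prop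
  | _, [], [] => False
  | b, [], _ :: _ => b = true
  | b, _ :: _, [] => b = false
  | b, c :: x, d :: y => (if b then c < d else d < c) ∨ (c = d ∧ altLtAux (!b) x y)

/-- The alternating lexicographic strict order (positions indexed from 0). -/
def AltLt [LinearOrder α] (x y : List α) : Prop := altLtAux true x y

/-- The reflexive alternating lexicographic order. -/
def AltLe [LinearOrder α] (x y : List α) : Prop := x = y ∨ AltLt x y

/-- A word is primitive if its cyclic rotations are pairwise distinct. -/
def Primitive (w : List α) : Prop :=
  ∀ i j, i < w.length → j < w.length → w.rotate i = w.rotate j → i = j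


/-- A primitive word `w` is a Galois word if `w ≼_alt vu` for every nontrivial
factorization `w = uv`. -/
def IsGalois [LinearOrder α] (w : List α) : Prop :=
  Primitive w ∧ ∀ u v : List α, w = u ++ v → u ≠ [] → v ≠ [] → AltLe w (v ++ u)

theorem altLtAux_asymm [LinearOrder α] {b : Bool} {x y : List α} (h : altLtAux b x y) :
    ¬ altLtAux b y x := by
  induction x generalizing b y with
  | nil => cases y <;> simp_all [altLtAux]
  | cons c x ih =>
    cases y with
    | nil => simp_all [altLtAux]
    | cons d y =>
      rintro (hdc | ⟨rfl, hyx⟩)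
      · rcases h with hcd | ⟨rfl, -⟩
        · cases b <;> exact lt_asymm hcd hdc
        · simp at hdc
      · rcases h with hdd | ⟨-, hxy⟩
        · simp at hdd
        · exact ih hxy hyx

theorem altLtAux_append_of_length_eq [LinearOrder α] {b : Bool} {x y : List α}
    (hlen : x.length = y.length) (h : altLtAux b x y) (z z' : List α) :
    altLtAux b (x ++ z) (y ++ z') := by
  induction x generalizing b y with
  | nil =>
    obtain rfl := List.length_eq_zero_iff.mp hlen.symm
    exact h.elim
  | cons c x ih =>
    cases y with
    | nil => simp at hlen
    | cons d y => exact h.imp_right (And.imp_right (ih (Nat.succ.inj hlen)))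

theorem altLtAux_append_left_iff [LinearOrder α] {b : Bool} {x y : List α} (u : List α) :
    altLtAux b (u ++ x) (u ++ y) ↔ altLtAux (not^[u.length] b) x y := by
  induction u generalizing b with
  | nil => rfl
  | cons c u ih => simp [altLtAux, ih]

theorem altLt_append_left_iff_of_even [LinearOrder α] {x y u : List α} (hu : Even u.length) :
    AltLt (u ++ x) (u ++ y) ↔ AltLt x y := by
  rw [AltLt, altLtAux_append_left_iff, Bool.involutive_not.iterate_even hu, id, AltLt]

theorem altLe_append_left_iff_of_even [LinearOrder α] {x y u : List α} (hu : Even u.length) :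
    AltLe (u ++ x) (u ++ y) ↔ AltLe x y :=
  or_congr (List.append_right_inj u) (altLt_append_left_iff_of_even hu)

namespace AltLe

variable [LinearOrder α] {x y : List α}

theorem antisymm (hxy : AltLe x y) (hyx : AltLe y x) : x = y :=
  hxy.elim id fun hlt => hyx.elim Eq.symm fun hgt => absurd hgt (altLtAux_asymm hlt)

theorem append_right (h : AltLe x y) (hlen : x.length = y.length) (z : List α) :
    AltLe (x ++ z) (y ++ z) :=
  h.imp (congrArg (· ++ z)) fun hlt => altLtAux_append_of_length_eq hlen hlt z z

end AltLe

theorem Primitive.append_ne_append_comm {u v : List α} (h : Primitive (u ++ v)) (hu : u ≠ [])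
    (hv : v ≠ []) : u ++ v ≠ v ++ u := by
  intro hcomm
  have hupos : 0 < u.length := List.length_pos_iff.mpr hu
  have hvpos : 0 < v.length := List.length_pos_iff.mpr hv
  have hlen : (u ++ v).length = u.length + v.length := List.length_append
  have hrot : (u ++ v).rotate u.length = (u ++ v).rotate 0 := by
    rw [List.rotate_append_length_eq, List.rotate_zero, hcomm]
  exact hupos.ne' (h _ _ (by lia) (by lia) hrot)

/-- every border of a Galois word (a nonempty proper factor that
is both a prefix and a suffix) has odd length. -/
theorem galois_border_odd_length [LinearOrder α] (w u : List α)
    (hG : IsGalois w) (hu : u ≠ []) (hlen : u.length < w.length)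
    (hpre : u <+: w) (hsuf : u <:+ w) :
    Odd u.length := by
  obtain ⟨v, rfl⟩ := hpre
  obtain ⟨v', hv'⟩ := hsuf
  obtain ⟨hprim, hmin⟩ := hG
  have hlen_eq : v.length = v'.length := by
    have := congrArg List.length hv'
    simp only [List.length_append] at this
    lia
  have hv : v ≠ [] := by rintro rfl; simp at hlen
  have hv'_ne : v' ≠ [] := fun h => hv (List.length_eq_zero_iff.mp (by simp [hlen_eq, h]))
  refine Nat.not_even_iff_odd.mp fun heven => ?_
  have hvv' : AltLe v v' :=
    (altLe_append_left_iff_of_even heven).mp (hmin v' u hv'.symm hv'_ne hu)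
  have hle : AltLe (v ++ u) (u ++ v) := hv' ▸ hvv'.append_right hlen_eq u
  exact hprim.append_ne_append_comm hu hv ((hmin u v rfl hu hv).antisymm hle)

end Paper
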